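/- For all treewidth patterns p, q, r with L_p = L_q = L_r: (p ⋈ q) ◁ r if and only if p ◁ (q ⋈ r), where by convention no treewidth pattern is compatible with ⊥ (so either side is false when the corresponding join equals ⊥). -/

import Mathlib

/-- A (candidate) treewidth pattern: a finite collection of blocks of labels in
`{0,…,k}`. -/
abbrev TWP (k : ℕ) := Finset (Finset (Fin (k + 1)))

/-- A treewidth pattern: a partition of a subset `L_p ⊆ {0,…,k}` containing `0`. -/
def IsTWPat {k : ℕ} (p : TWP k) : Prop :=
  (∀ S ∈ p, S.Nonempty) ∧ (∀ S ∈ p, ∀ T ∈ p, S ≠ T → Disjoint S T) ∧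
    ∃ S ∈ p, (0 : Fin (k + 1)) ∈ S

/-- The label set `L_p` of a pattern. -/
def labels {k : ℕ} (p : TWP k) : Finset (Fin (k + 1)) := p.sup id

/-- The glueing of the canonical forests of two treewidth patterns `p` and `q`: the
(identified) boundary vertices are represented by their labels, and each block gets a
star center adjacent to the labels it contains.  (Labels outside `L_p` are isolated and
affect neither acyclicity nor components meeting the boundary.) -/
def glueTP {k : ℕ} (p q : TWP k) :
    SimpleGraph (Fin (k + 1) ⊕ ({S // S ∈ p} ⊕ {S // S ∈ q})) :=
  SimpleGraph.fromRel fun x y =>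
    match x, y with
    | Sum.inl ℓ, Sum.inr (Sum.inl S) => ℓ ∈ S.1
    | Sum.inl ℓ, Sum.inr (Sum.inr S) => ℓ ∈ S.1
    | _, _ => False

/-- Compatibility `p ◁ q` of treewidth patterns: the label sets agree and the glueing of
the canonical forests is acyclic. -/
def Compat {k : ℕ} (p q : TWP k) : Prop :=
  labels p = labels q ∧ (glueTP p q).IsAcyclic

open scoped Classical in
/-- The join `p ⋈ q` of two treewidth patterns: `⊥` (i.e. `none`) if the label sets differ
or the glueing of the canonical forests contains a cycle; otherwise the pattern whose
blocks are the label sets of the connected components of the glued forest. -/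
noncomputable def joinTP {k : ℕ} (p q : TWP k) : Option (TWP k) :=
  if labels p = labels q ∧ (glueTP p q).IsAcyclic then
    some ((labels p).image fun ℓ =>
      (labels p).filter fun ℓ' => (glueTP p q).Reachable (Sum.inl ℓ) (Sum.inl ℓ'))
  else none

open scoped Classical in
/-- A family `R` of treewidth patterns represents a family `S` if for every treewidth
pattern `r`, the numbers of patterns of `R` and of `S` compatible with `r` agree
modulo 2. -/
def Represents {k : ℕ} (R S : Finset (TWP k)) : Prop :=
  ∀ r : TWP k, IsTWPat r →
    (R.filter fun pp => Compat pp r).card % 2 = (S.filter fun pp => Compat pp r).card % 2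

namespace JCA

theorem quot_card_eq {α : Type*} (R R' : α → α → Prop)
    (h : ∀ a b, R a b → Quot.mk R' a = Quot.mk R' b)
    (h' : ∀ a b, R' a b → Quot.mk R a = Quot.mk R b) :
    Nat.card (Quot R) = Nat.card (Quot R') := by
  refine Nat.card_congr ⟨Quot.lift (Quot.mk R') h, Quot.lift (Quot.mk R) h', ?_, ?_⟩
  · rintro ⟨a⟩; rfl
  · rintro ⟨a⟩; rfl

section forest
variable {V : Type*} [Finite V]

theorem reach_sup {G : SimpleGraph V} {u v a b : V}
    (h : (G ⊔ SimpleGraph.edge u v).Reachable a b) :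
    G.Reachable a b ∨ (G.Reachable a u ∧ G.Reachable v b) ∨
      (G.Reachable a v ∧ G.Reachable u b) := by
  rw [SimpleGraph.reachable_iff_reflTransGen] at h
  induction h with
  | refl => exact Or.inl (SimpleGraph.Reachable.refl _)
  | @tail c d _ hcd ih =>
    rw [SimpleGraph.sup_adj, SimpleGraph.edge_adj] at hcd
    rcases hcd with hcd | ⟨⟨rfl, rfl⟩ | ⟨rfl, rfl⟩, _⟩
    · have := hcd.reachable
      rcases ih with ih | ⟨h1, h2⟩ | ⟨h1, h2⟩
      · exact Or.inl (ih.trans this)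
      · exact Or.inr (Or.inl ⟨h1, h2.trans this⟩)
      · exact Or.inr (Or.inr ⟨h1, h2.trans this⟩)
    · rcases ih with ih | ⟨h1, h2⟩ | ⟨h1, h2⟩
      · exact Or.inr (Or.inl ⟨ih, SimpleGraph.Reachable.refl _⟩)
      · exact Or.inr (Or.inl ⟨h1, SimpleGraph.Reachable.refl _⟩)
      · exact Or.inl h1
    · rcases ih with ih | ⟨h1, h2⟩ | ⟨h1, h2⟩
      · exact Or.inr (Or.inr ⟨ih, SimpleGraph.Reachable.refl _⟩)
      · exact Or.inl h1
      · exact Or.inr (Or.inr ⟨h1, SimpleGraph.Reachable.refl _⟩)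

theorem cc_sup {G : SimpleGraph V} {u v : V} (huv : ¬ G.Reachable u v) :
    Nat.card G.ConnectedComponent =
      Nat.card (G ⊔ SimpleGraph.edge u v).ConnectedComponent + 1 := by
  classical
  have hne : u ≠ v := by rintro rfl; exact huv (SimpleGraph.Reachable.refl _)
  have hr : (G ⊔ SimpleGraph.edge u v).Reachable u v := by
    apply SimpleGraph.Adj.reachable
    rw [SimpleGraph.sup_adj, SimpleGraph.edge_adj]
    exact Or.inr ⟨Or.inl ⟨rfl, rfl⟩, hne⟩
  have hle : G ≤ G ⊔ SimpleGraph.edge u v := le_sup_left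
  let f : {c : G.ConnectedComponent // c ≠ G.connectedComponentMk u} →
      (G ⊔ SimpleGraph.edge u v).ConnectedComponent :=
    fun c => c.1.map (SimpleGraph.Hom.ofLE hle)
  have hf : Function.Bijective f := by
    constructor
    · rintro ⟨a, ha⟩ ⟨b, hb⟩ hab
      induction a using SimpleGraph.ConnectedComponent.ind with | _ a =>
      induction b using SimpleGraph.ConnectedComponent.ind with | _ b =>
      have hab' : (G ⊔ SimpleGraph.edge u v).Reachable a b :=
        SimpleGraph.ConnectedComponent.exact hab
      rw [Ne, SimpleGraph.ConnectedComponent.eq] at ha hb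
      apply Subtype.ext
      rcases reach_sup hab' with h | ⟨h, _⟩ | ⟨_, h⟩
      · exact SimpleGraph.ConnectedComponent.sound h
      · exact absurd h ha
      · exact absurd h.symm hb
    · intro c
      induction c using SimpleGraph.ConnectedComponent.ind with | _ a =>
      by_cases h : G.Reachable a u
      · refine ⟨⟨G.connectedComponentMk v, ?_⟩, ?_⟩
        · rw [Ne, SimpleGraph.ConnectedComponent.eq]
          exact fun h => huv h.symm
        · exact SimpleGraph.ConnectedComponent.sound (hr.symm.trans (h.mono hle).symm)
      · refine ⟨⟨G.connectedComponentMk a, ?_⟩, rfl⟩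
        rwa [Ne, SimpleGraph.ConnectedComponent.eq]
  have e := Nat.card_congr (Equiv.ofBijective f hf)
  rw [← e, ← Nat.card_congr (Equiv.optionSubtypeNe (G.connectedComponentMk u)),
    Finite.card_option]

theorem acyclic_count (n : ℕ) : ∀ G : SimpleGraph V, G.edgeSet.ncard = n → G.IsAcyclic →
    Nat.card V = G.edgeSet.ncard + Nat.card G.ConnectedComponent := by
  induction n with
  | zero =>
    intro G h hG
    rw [Set.ncard_eq_zero, SimpleGraph.edgeSet_eq_empty] at h
    subst h
    simp only [SimpleGraph.edgeSet_bot, Set.ncard_empty, zero_add]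
    refine Nat.card_congr (Equiv.ofBijective (SimpleGraph.connectedComponentMk ⊥) ⟨?_, ?_⟩)
    · intro a b hab
      simpa using SimpleGraph.ConnectedComponent.exact hab
    · intro c
      induction c using SimpleGraph.ConnectedComponent.ind with | _ a =>
      exact ⟨a, rfl⟩
  | succ n ih =>
    intro G h hG
    have hne : G.edgeSet.Nonempty := by
      rw [← Set.ncard_pos]; omega
    obtain ⟨e, he⟩ := hne
    induction e using Sym2.ind with | _ u v =>
    have hadj : G.Adj u v := he
    have hb := SimpleGraph.isAcyclic_iff_forall_adj_isBridge.1 hG hadj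
    set H := G.deleteEdges {s(u, v)} with hH
    have hnr : ¬ H.Reachable u v := by
      have := hb
      rw [SimpleGraph.isBridge_iff] at this
      exact this
    have hGH : H ⊔ SimpleGraph.edge u v = G := by
      ext a b
      simp only [hH, SimpleGraph.sup_adj, SimpleGraph.edge_adj, SimpleGraph.deleteEdges_adj,
        Set.mem_singleton_iff, Sym2.eq_iff]
      have := hadj.symm
      have := hadj.ne
      constructor
      · rintro (h | ⟨⟨rfl, rfl⟩ | ⟨rfl, rfl⟩, _⟩)
        · exact h.1
        · assumption
        · assumption
      · intro h
        have := h.ne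
        tauto
    have hE : H.edgeSet.ncard + 1 = G.edgeSet.ncard := by
      rw [hH, SimpleGraph.edgeSet_deleteEdges]
      exact Set.ncard_sdiff_singleton_add_one he
    have hc := cc_sup hnr
    rw [hGH] at hc
    have := ih H (by omega) (hG.anti (SimpleGraph.deleteEdges_le _))
    omega

theorem forest_count (G : SimpleGraph V) :
    Nat.card V ≤ G.edgeSet.ncard + Nat.card G.ConnectedComponent ∧
    (G.IsAcyclic ↔ Nat.card V = G.edgeSet.ncard + Nat.card G.ConnectedComponent) := by
  by_cases hG : G.IsAcyclic
  · have := acyclic_count _ G rfl hG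
    exact ⟨this.le, by simp [hG, this]⟩
  · obtain ⟨F, hF, hFa, hr⟩ := SimpleGraph.exists_isAcyclic_reachable_eq_le (G := G)
    have h1 := acyclic_count _ F rfl hFa
    have hne : F.edgeSet ⊂ G.edgeSet := by
      rw [SimpleGraph.edgeSet_ssubset_edgeSet]
      refine lt_of_le_of_ne hF ?_
      rintro rfl; exact hG hFa
    have h2 := Set.ncard_lt_ncard hne
    have h3 : Nat.card F.ConnectedComponent = Nat.card G.ConnectedComponent := by
      unfold SimpleGraph.ConnectedComponent
      rw [hr]
    constructor
    · omega
    · constructor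
      · intro h; exact absurd h hG
      · intro h; omega

end forest

variable {k : ℕ}

def Rel (p : TWP k) (a b : Fin (k + 1)) : Prop := ∃ S ∈ p, a ∈ S ∧ b ∈ S

def Rel2 (p q : TWP k) (a b : Fin (k + 1)) : Prop := Rel p a b ∨ Rel q a b

def Rel3 (p q r : TWP k) (a b : Fin (k + 1)) : Prop := Rel p a b ∨ Rel q a b ∨ Rel r a b

/-- nonempty disjoint blocks -/
def Good (p : TWP k) : Prop :=
  (∀ S ∈ p, S.Nonempty) ∧ (∀ S ∈ p, ∀ T ∈ p, S ≠ T → Disjoint S T)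

theorem mem_labels {p : TWP k} {a : Fin (k + 1)} : a ∈ labels p ↔ ∃ S ∈ p, a ∈ S := by
  simp [labels, Finset.mem_sup]

theorem good_unique {p : TWP k} (hp : Good p) {S T : Finset (Fin (k + 1))} (hS : S ∈ p)
    (hT : T ∈ p) {a : Fin (k + 1)} (h1 : a ∈ S) (h2 : a ∈ T) : S = T := by
  by_contra h
  exact Finset.disjoint_left.1 (hp.2 S hS T hT h) h1 h2

@[simp] theorem adj_l (p q : TWP k) (a : Fin (k + 1)) (S : {S // S ∈ p}) :
    (glueTP p q).Adj (Sum.inl a) (Sum.inr (Sum.inl S)) ↔ a ∈ S.1 := by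
  simp [glueTP]

@[simp] theorem adj_r (p q : TWP k) (a : Fin (k + 1)) (S : {S // S ∈ q}) :
    (glueTP p q).Adj (Sum.inl a) (Sum.inr (Sum.inr S)) ↔ a ∈ S.1 := by
  simp [glueTP]

@[simp] theorem adj_ll (p q : TWP k) (a b : Fin (k + 1)) :
    ¬ (glueTP p q).Adj (Sum.inl a) (Sum.inl b) := by
  simp [glueTP]

@[simp] theorem adj_rr (p q : TWP k) (a b) :
    ¬ (glueTP p q).Adj (Sum.inr a) (Sum.inr b) := by
  simp [glueTP]

theorem exists_F (p q : TWP k) (hp : Good p) (hq : Good q) :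
    ∃ F : (glueTP p q).ConnectedComponent → Quot (Rel2 p q),
      (∀ a, F ((glueTP p q).connectedComponentMk (Sum.inl a)) = Quot.mk _ a) := by
  choose f hf using hp.1
  choose g hg using hq.1
  let F₀ : (Fin (k + 1) ⊕ ({S // S ∈ p} ⊕ {S // S ∈ q})) → Quot (Rel2 p q) := fun x =>
    match x with
    | Sum.inl a => Quot.mk _ a
    | Sum.inr (Sum.inl S) => Quot.mk _ (f S.1 S.2)
    | Sum.inr (Sum.inr S) => Quot.mk _ (g S.1 S.2)
  have key : ∀ a y, (glueTP p q).Adj (Sum.inl a) y → F₀ (Sum.inl a) = F₀ y := by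
    rintro a (b | S | S) h
    · exact absurd h (adj_ll _ _ _ _)
    · exact Quot.sound (Or.inl ⟨S.1, S.2, (adj_l _ _ _ _).1 h, hf _ _⟩)
    · exact Quot.sound (Or.inr ⟨S.1, S.2, (adj_r _ _ _ _).1 h, hg _ _⟩)
  have key2 : ∀ x y, (glueTP p q).Adj x y → F₀ x = F₀ y := by
    rintro (a | x) y h
    · exact key a y h
    · rcases y with b | y
      · exact (key b _ h.symm).symm
      · exact absurd h (adj_rr _ _ _ _)
  have key3 : ∀ x y, (glueTP p q).Reachable x y → F₀ x = F₀ y := by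
    intro x y h
    rw [SimpleGraph.reachable_iff_reflTransGen] at h
    induction h with
    | refl => rfl
    | tail _ h ih => exact ih.trans (key2 _ _ h)
  exact ⟨Quot.lift F₀ key3, fun a => rfl⟩

theorem rel_reach (p q : TWP k) {a b : Fin (k + 1)} (h : Rel2 p q a b) :
    (glueTP p q).connectedComponentMk (Sum.inl a) =
      (glueTP p q).connectedComponentMk (Sum.inl b) := by
  apply SimpleGraph.ConnectedComponent.sound
  rcases h with ⟨S, hS, ha, hb⟩ | ⟨S, hS, ha, hb⟩
  · exact ((adj_l p q a ⟨S, hS⟩).2 ha).reachable.trans ((adj_l p q b ⟨S, hS⟩).2 hb).reachable.symm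
  · exact ((adj_r p q a ⟨S, hS⟩).2 ha).reachable.trans ((adj_r p q b ⟨S, hS⟩).2 hb).reachable.symm

theorem reach_iff (p q : TWP k) (hp : Good p) (hq : Good q) (a b : Fin (k + 1)) :
    (glueTP p q).Reachable (Sum.inl a) (Sum.inl b) ↔
      Quot.mk (Rel2 p q) a = Quot.mk (Rel2 p q) b := by
  obtain ⟨F, hF⟩ := exists_F p q hp hq
  constructor
  · intro h
    rw [← hF, ← hF, SimpleGraph.ConnectedComponent.sound h]
  · intro h
    exact SimpleGraph.ConnectedComponent.exact
      (congrArg (Quot.lift (fun a => (glueTP p q).connectedComponentMk (Sum.inl a))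
        (fun a b h => rel_reach p q h)) h)

theorem card_cc (p q : TWP k) (hp : Good p) (hq : Good q) :
    Nat.card (glueTP p q).ConnectedComponent = Nat.card (Quot (Rel2 p q)) := by
  symm
  refine Nat.card_congr (Equiv.ofBijective
    (Quot.lift (fun a => (glueTP p q).connectedComponentMk (Sum.inl a))
        (fun a b h => rel_reach p q h)) ⟨?_, ?_⟩)
  · rintro ⟨a⟩ ⟨b⟩ h
    exact (reach_iff p q hp hq a b).1 (SimpleGraph.ConnectedComponent.exact h)
  · intro c
    induction c using SimpleGraph.ConnectedComponent.ind with | _ x =>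
    rcases x with a | S | S
    · exact ⟨Quot.mk _ a, rfl⟩
    · obtain ⟨a, ha⟩ := hp.1 S.1 S.2
      exact ⟨Quot.mk _ a, SimpleGraph.ConnectedComponent.sound ((adj_l p q a S).2 ha).reachable⟩
    · obtain ⟨a, ha⟩ := hq.1 S.1 S.2
      exact ⟨Quot.mk _ a, SimpleGraph.ConnectedComponent.sound ((adj_r p q a S).2 ha).reachable⟩

theorem card_edges (p q : TWP k) (hp : Good p) (hq : Good q) (hL : labels p = labels q) :
    (glueTP p q).edgeSet.ncard = 2 * (labels p).card := by
  have h1 : ∀ a : {a // a ∈ labels p}, ∃ S : {S // S ∈ p}, a.1 ∈ S.1 := by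
    rintro ⟨a, ha⟩
    obtain ⟨S, hS, h⟩ := mem_labels.1 ha
    exact ⟨⟨S, hS⟩, h⟩
  have h2 : ∀ a : {a // a ∈ labels p}, ∃ S : {S // S ∈ q}, a.1 ∈ S.1 := by
    rintro ⟨a, ha⟩
    rw [hL] at ha
    obtain ⟨S, hS, h⟩ := mem_labels.1 ha
    exact ⟨⟨S, hS⟩, h⟩
  choose f hf using h1
  choose g hg using h2
  let E : {a // a ∈ labels p} ⊕ {a // a ∈ labels p} →
      Sym2 (Fin (k + 1) ⊕ ({S // S ∈ p} ⊕ {S // S ∈ q})) := fun x =>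
    match x with
    | Sum.inl a => s(Sum.inl a.1, Sum.inr (Sum.inl (f a)))
    | Sum.inr a => s(Sum.inl a.1, Sum.inr (Sum.inr (g a)))
  have hinj : Function.Injective E := by
    rintro (a | a) (b | b) h <;> simp [E] at h
    · rw [h.1]
    · rw [h.1]
  have key : ∀ a y, (glueTP p q).Adj (Sum.inl a) y → s(Sum.inl a, y) ∈ Set.range E := by
    rintro a (b | S | S) h
    · exact absurd h (adj_ll _ _ _ _)
    · rw [adj_l] at h
      refine ⟨Sum.inl ⟨a, mem_labels.2 ⟨S.1, S.2, h⟩⟩, ?_⟩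
      have : f ⟨a, mem_labels.2 ⟨S.1, S.2, h⟩⟩ = S :=
        Subtype.ext (good_unique hp (f _).2 S.2 (hf _) h)
      simp [E, this]
    · rw [adj_r] at h
      have ha : a ∈ labels p := by rw [hL]; exact mem_labels.2 ⟨S.1, S.2, h⟩
      refine ⟨Sum.inr ⟨a, ha⟩, ?_⟩
      have : g ⟨a, ha⟩ = S :=
        Subtype.ext (good_unique hq (g _).2 S.2 (hg _) h)
      simp [E, this]
  have hrange : (glueTP p q).edgeSet = Set.range E := by
    ext e
    constructor
    · induction e using Sym2.ind with | _ x y =>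
      intro h
      rw [SimpleGraph.mem_edgeSet] at h
      rcases x with a | x
      · exact key a y h
      · rcases y with b | y
        · rw [Sym2.eq_swap]; exact key b _ h.symm
        · exact absurd h (adj_rr _ _ _ _)
    · rintro ⟨a | a, rfl⟩
      · exact (adj_l p q _ _).2 (hf a)
      · exact (adj_r p q _ _).2 (hg a)
  rw [hrange, ← Nat.card_coe_set_eq, Nat.card_range_of_injective hinj]
  simp [two_mul]

theorem acyc_iff (p q : TWP k) (hp : Good p) (hq : Good q) (hL : labels p = labels q) :
    (k + 1) + p.card + q.card ≤ 2 * (labels p).card + Nat.card (Quot (Rel2 p q)) ∧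
    ((glueTP p q).IsAcyclic ↔
      (k + 1) + p.card + q.card = 2 * (labels p).card + Nat.card (Quot (Rel2 p q))) := by
  have := forest_count (glueTP p q)
  rw [card_cc p q hp hq, card_edges p q hp hq hL] at this
  have h : Nat.card (Fin (k + 1) ⊕ ({S // S ∈ p} ⊕ {S // S ∈ q})) = (k + 1) + p.card + q.card := by
    simp [add_assoc]
  rwa [h] at this

open scoped Classical in
noncomputable def J (p q : TWP k) : TWP k :=
  (labels p).image fun ℓ =>
      (labels p).filter fun ℓ' => (glueTP p q).Reachable (Sum.inl ℓ) (Sum.inl ℓ')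

theorem mem_J {p q : TWP k} {S : Finset (Fin (k + 1))} : S ∈ J p q ↔
    ∃ a ∈ labels p, ∀ b, b ∈ S ↔ b ∈ labels p ∧ (glueTP p q).Reachable (Sum.inl a) (Sum.inl b) := by
  classical
  simp only [J, Finset.mem_image]
  refine exists_congr fun a => and_congr_right fun _ => ?_
  rw [Finset.ext_iff]
  refine forall_congr' fun b => ?_
  rw [Finset.mem_filter]
  exact iff_comm

theorem good_J (p q : TWP k) : Good (J p q) := by
  constructor
  · intro S hS
    obtain ⟨a, ha, h⟩ := mem_J.1 hS
    exact ⟨a, (h a).2 ⟨ha, SimpleGraph.Reachable.refl _⟩⟩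
  · intro S hS T hT hne
    obtain ⟨a, ha, h⟩ := mem_J.1 hS
    obtain ⟨b, hb, h'⟩ := mem_J.1 hT
    rw [Finset.disjoint_left]
    intro c hc hc'
    apply hne
    have h1 := ((h c).1 hc).2
    have h2 := ((h' c).1 hc').2
    ext d
    rw [h, h']
    refine and_congr_right fun _ => ⟨fun x => (h2.trans h1.symm).trans x,
      fun x => (h1.trans h2.symm).trans x⟩

theorem rel_J {p q : TWP k} {a b : Fin (k + 1)} : Rel (J p q) a b ↔
    a ∈ labels p ∧ b ∈ labels p ∧ (glueTP p q).Reachable (Sum.inl a) (Sum.inl b) := by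
  classical
  constructor
  · rintro ⟨S, hS, ha, hb⟩
    obtain ⟨c, hc, h⟩ := mem_J.1 hS
    have h1 := (h a).1 ha
    have h2 := (h b).1 hb
    exact ⟨h1.1, h2.1, h1.2.symm.trans h2.2⟩
  · rintro ⟨ha, hb, h⟩
    refine ⟨_, Finset.mem_image_of_mem _ ha, ?_, ?_⟩
    · simp [ha]
    · simp [hb, h]

theorem labels_J (p q : TWP k) : labels (J p q) = labels p := by
  ext a
  have : a ∈ labels (J p q) ↔ Rel (J p q) a a := by
    rw [mem_labels]; simp [Rel]
  rw [this, rel_J]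
  simp

theorem card_J (p q : TWP k) (hp : Good p) (hq : Good q) (hL : labels p = labels q) :
    (J p q).card + (k + 1) = Nat.card (Quot (Rel2 p q)) + (labels p).card := by
  classical
  let f : Quot (Rel2 p q) → Option (Fin (k + 1)) :=
    Quot.lift (fun a => if a ∈ labels p then none else some a) (by
      intro a b h
      have : a ∈ labels p ∧ b ∈ labels p := by
        rcases h with ⟨S, hS, ha, hb⟩ | ⟨S, hS, ha, hb⟩
        · exact ⟨mem_labels.2 ⟨S, hS, ha⟩, mem_labels.2 ⟨S, hS, hb⟩⟩
        · rw [hL]; exact ⟨mem_labels.2 ⟨S, hS, ha⟩, mem_labels.2 ⟨S, hS, hb⟩⟩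
      simp [this])
  have hf : ∀ a, f (Quot.mk _ a) = if a ∈ labels p then none else some a := fun a => rfl
  haveI : Fintype (Quot (Rel2 p q)) := Fintype.ofFinite _
  have huniv : (Finset.univ : Finset (Quot (Rel2 p q))) =
      (labels p).image (Quot.mk _) ∪ (labels p)ᶜ.image (Quot.mk _) := by
    ext x
    induction x using Quot.ind with | _ a =>
    simp only [Finset.mem_univ, true_iff, Finset.mem_union]
    by_cases ha : a ∈ labels p
    · exact Or.inl (Finset.mem_image_of_mem _ ha)
    · exact Or.inr (Finset.mem_image_of_mem _ (Finset.mem_compl.2 ha))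
  have hdisj : Disjoint ((labels p).image (Quot.mk (Rel2 p q)))
      ((labels p)ᶜ.image (Quot.mk (Rel2 p q))) := by
    rw [Finset.disjoint_left]
    intro x hx hx'
    obtain ⟨a, ha, rfl⟩ := Finset.mem_image.1 hx
    obtain ⟨b, hb, h⟩ := Finset.mem_image.1 hx'
    have := congrArg f h
    rw [hf, hf, if_pos ha, if_neg (Finset.mem_compl.1 hb)] at this
    simp at this
  have h2 : ((labels p)ᶜ.image (Quot.mk (Rel2 p q))).card = (labels p)ᶜ.card := by
    apply Finset.card_image_of_injOn
    intro a ha b hb h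
    have := congrArg f h
    rw [hf, hf, if_neg (Finset.mem_compl.1 ha), if_neg (Finset.mem_compl.1 hb)] at this
    simpa using this
  have h1 : ((labels p).image (Quot.mk (Rel2 p q))).card = (J p q).card := by
    let g : Quot (Rel2 p q) → Finset (Fin (k + 1)) := fun x =>
      (labels p).filter fun b => x = Quot.mk _ b
    have : J p q = ((labels p).image (Quot.mk (Rel2 p q))).image g := by
      rw [Finset.image_image]
      unfold J
      refine Finset.image_congr fun a _ => ?_
      simp only [g, Function.comp]
      ext b
      simp [reach_iff p q hp hq]
    rw [this]; symm; apply Finset.card_image_of_injOn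
    intro x hx y hy h
    obtain ⟨a, ha, rfl⟩ := Finset.mem_image.1 hx
    have ha' : a ∈ g (Quot.mk _ a) := by simpa [g] using ha
    rw [h] at ha'
    simp only [g, Finset.mem_filter] at ha'
    exact ha'.2.symm
  have h3 := Finset.card_union_of_disjoint hdisj
  rw [← huniv, h1, h2, Finset.card_univ, Finset.card_compl, Fintype.card_fin] at h3
  have h4 : (labels p).card ≤ k + 1 := by
    simpa using Finset.card_le_univ (labels p)
  rw [Nat.card_eq_fintype_card]
  omega

theorem rel_lift {α : Type*} {R R' : α → α → Prop}
    (h : ∀ a b, R a b → Quot.mk R' a = Quot.mk R' b) {a b : α}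
    (hab : Quot.mk R a = Quot.mk R b) : Quot.mk R' a = Quot.mk R' b :=
  congrArg (Quot.lift (Quot.mk R') h) hab

theorem rel_J_of_rel2 {p q : TWP k} (hL : labels p = labels q) {a b : Fin (k + 1)}
    (h : Rel2 p q a b) : Rel (J p q) a b := by
  rw [rel_J]
  have : a ∈ labels p ∧ b ∈ labels p := by
    rcases h with ⟨S, hS, ha, hb⟩ | ⟨S, hS, ha, hb⟩
    · exact ⟨mem_labels.2 ⟨S, hS, ha⟩, mem_labels.2 ⟨S, hS, hb⟩⟩
    · rw [hL]; exact ⟨mem_labels.2 ⟨S, hS, ha⟩, mem_labels.2 ⟨S, hS, hb⟩⟩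
  exact ⟨this.1, this.2, SimpleGraph.ConnectedComponent.exact (rel_reach p q h)⟩

theorem card_left (p q r : TWP k) (hp : Good p) (hq : Good q) (hL : labels p = labels q) :
    Nat.card (Quot (Rel2 (J p q) r)) = Nat.card (Quot (Rel3 p q r)) := by
  apply quot_card_eq
  · rintro a b (h | h)
    · have := (reach_iff p q hp hq a b).1 (rel_J.1 h).2.2
      refine rel_lift ?_ this
      rintro a b (h | h)
      · exact Quot.sound (Or.inl h)
      · exact Quot.sound (Or.inr (Or.inl h))
    · exact Quot.sound (Or.inr (Or.inr h))
  · rintro a b (h | h | h)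
    · exact Quot.sound (Or.inl (rel_J_of_rel2 hL (Or.inl h)))
    · exact Quot.sound (Or.inl (rel_J_of_rel2 hL (Or.inr h)))
    · exact Quot.sound (Or.inr h)

theorem card_right (p q r : TWP k) (hq : Good q) (hr : Good r) (hL : labels q = labels r) :
    Nat.card (Quot (Rel2 p (J q r))) = Nat.card (Quot (Rel3 p q r)) := by
  apply quot_card_eq
  · rintro a b (h | h)
    · exact Quot.sound (Or.inl h)
    · have := (reach_iff q r hq hr a b).1 (rel_J.1 h).2.2
      refine rel_lift ?_ this
      rintro a b (h | h)
      · exact Quot.sound (Or.inr (Or.inl h))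
      · exact Quot.sound (Or.inr (Or.inr h))
  · rintro a b (h | h | h)
    · exact Quot.sound (Or.inl h)
    · exact Quot.sound (Or.inr (rel_J_of_rel2 hL (Or.inl h)))
    · exact Quot.sound (Or.inr (rel_J_of_rel2 hL (Or.inr h)))

theorem join_some {p q s : TWP k} (hL : labels p = labels q) :
    joinTP p q = some s ↔ (glueTP p q).IsAcyclic ∧ J p q = s := by
  classical
  unfold joinTP
  by_cases h : (glueTP p q).IsAcyclic
  · rw [if_pos ⟨hL, h⟩, Option.some_inj]
    simp only [h, true_and]
    rfl
  · rw [if_neg (fun h' => h h'.2)]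
    simp [h]

end JCA

/-- For treewidth patterns `p, q, r` with equal label sets:
`(p ⋈ q) ◁ r` iff `p ◁ (q ⋈ r)`, where no pattern is compatible with `⊥`. -/
theorem join_compat_assoc {k : ℕ} (p q r : TWP k)
    (hp : IsTWPat p) (hq : IsTWPat q) (hr : IsTWPat r)
    (hpq : labels p = labels q) (hqr : labels q = labels r) :
    (∃ s, joinTP p q = some s ∧ Compat s r) ↔ (∃ s, joinTP q r = some s ∧ Compat p s) := by
  have gp : JCA.Good p := ⟨hp.1, hp.2.1⟩
  have gq : JCA.Good q := ⟨hq.1, hq.2.1⟩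
  have gr : JCA.Good r := ⟨hr.1, hr.2.1⟩
  have hl1 : labels (JCA.J p q) = labels r := by rw [JCA.labels_J, hpq, hqr]
  have hl2 : labels p = labels (JCA.J q r) := by rw [JCA.labels_J, hpq]
  have e1 : (∃ s, joinTP p q = some s ∧ Compat s r) ↔
      (glueTP p q).IsAcyclic ∧ (glueTP (JCA.J p q) r).IsAcyclic := by
    simp only [JCA.join_some hpq]
    constructor
    · rintro ⟨s, ⟨h, rfl⟩, h2⟩; exact ⟨h, h2.2⟩
    · rintro ⟨h, h2⟩; exact ⟨_, ⟨h, rfl⟩, hl1, h2⟩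
  have e2 : (∃ s, joinTP q r = some s ∧ Compat p s) ↔
      (glueTP q r).IsAcyclic ∧ (glueTP p (JCA.J q r)).IsAcyclic := by
    simp only [JCA.join_some hqr]
    constructor
    · rintro ⟨s, ⟨h, rfl⟩, h2⟩; exact ⟨h, h2.2⟩
    · rintro ⟨h, h2⟩; exact ⟨_, ⟨h, rfl⟩, hl2, h2⟩
  obtain ⟨a1, b1⟩ := JCA.acyc_iff p q gp gq hpq
  obtain ⟨a2, b2⟩ := JCA.acyc_iff q r gq gr hqr
  obtain ⟨a3, b3⟩ := JCA.acyc_iff _ r (JCA.good_J p q) gr hl1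
  obtain ⟨a4, b4⟩ := JCA.acyc_iff p _ gp (JCA.good_J q r) hl2
  rw [e1, e2, b1, b2, b3, b4]
  rw [JCA.card_left p q r gp gq hpq] at *
  rw [JCA.card_right p q r gq gr hqr] at *
  have c1 := JCA.card_J p q gp gq hpq
  have c2 := JCA.card_J q r gq gr hqr
  have d1 : (labels (JCA.J p q)).card = (labels p).card := by rw [JCA.labels_J]
  have d2 : (labels q).card = (labels p).card := by rw [hpq]
  omega
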